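/- Let μ ⪯ ν be probability measures on ℝ in convex order with supp(μ) ⊆ [0,∞), and let Γ ⊆ ℝ² be a maximising monotonicity set for the pair of cost functions c(x,y) := |x+y| and c'(x,y) := |x+y|y². Suppose (x,y⁺), (x,y⁻), (x',y') ∈ Γ with y⁻ < −x' < y⁺ and y⁻ < y' < y⁺. Then it cannot be that (i) y' ≤ −x' and x < x', and it cannot be that (ii) −x' ≤ y' and x' < x. -/

import Mathlib

/-!
Let `ρ` and `σ` be finite measures on `ℝ` with finite support, equal mass and equal mean, carried by
the fibers of `Γ` over `x` and `x'`. Exchanging the two fibers turns `δ_x ⊗ ρ + δ_{x'} ⊗ σ` into a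
competitor, so a maximising monotonicity set satisfies `∫ g dσ ≤ ∫ g dρ` for
`g y = c x y - c x' y`. Taking `σ = δ_{y'}`, and `ρ` on two points around `y'`, shows that `g` lies
below its chord at `y'`. For `c x y = |x + y|`, the function `g` has maximum `|x - x'|`, attained
exactly where `0 ≤ (x - x') * (x' + y)`. In a forbidden configuration `g` is maximal at `y'` but not
at one of the two endpoints, so `g y'` would lie strictly above the chord.
-/

open MeasureTheory

noncomputable section

/-- `μ` and `ν` are in convex order. -/
def InConvexOrder (μ ν : Measure ℝ) : Prop :=
  ∀ φ : ℝ → ℝ, ConvexOn ℝ Set.univ φ → Integrable φ μ → Integrable φ ν →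
    ∫ x, φ x ∂μ ≤ ∫ x, φ x ∂ν

/-- `α` has finite support contained in `Γ`. -/
def HasFiniteSupportIn (α : Measure (ℝ × ℝ)) (Γ : Set (ℝ × ℝ)) : Prop :=
  ∃ S : Finset (ℝ × ℝ), ↑S ⊆ Γ ∧ α ((↑S : Set (ℝ × ℝ))ᶜ) = 0

/-- `α'` is a competitor of `α`: a finitely supported measure with the same
marginals whose fiberwise barycenters agree with those of `α`. -/
def IsCompetitor (α α' : Measure (ℝ × ℝ)) : Prop :=
  (∃ S : Finset (ℝ × ℝ), α' ((↑S : Set (ℝ × ℝ))ᶜ) = 0) ∧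
  α'.map Prod.fst = α.map Prod.fst ∧
  α'.map Prod.snd = α.map Prod.snd ∧
  ∀ x : ℝ, ∫ p in {p : ℝ × ℝ | p.1 = x}, p.2 ∂α' =
    ∫ p in {p : ℝ × ℝ | p.1 = x}, p.2 ∂α

/-- `Γ` is a minimising monotonicity set for `(c, c')`: for every finitely
supported measure `α` with support in `Γ` and every competitor `α'` of `α`,
`∫ c dα ≤ ∫ c dα'`, and `∫ c dα = ∫ c dα'` implies `∫ c' dα ≥ ∫ c' dα'`. -/
def IsMinMonotonicitySet (c c' : ℝ → ℝ → ℝ) (Γ : Set (ℝ × ℝ)) : Prop :=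
  ∀ α : Measure (ℝ × ℝ), IsFiniteMeasure α → HasFiniteSupportIn α Γ →
    ∀ α' : Measure (ℝ × ℝ), IsCompetitor α α' →
      (∫ p : ℝ × ℝ, c p.1 p.2 ∂α ≤ ∫ p : ℝ × ℝ, c p.1 p.2 ∂α') ∧
      (∫ p : ℝ × ℝ, c p.1 p.2 ∂α = ∫ p : ℝ × ℝ, c p.1 p.2 ∂α' →
        ∫ p : ℝ × ℝ, c' p.1 p.2 ∂α' ≤ ∫ p : ℝ × ℝ, c' p.1 p.2 ∂α)

/-- `Γ` is a maximising monotonicity set for `(c, c')`: for every finitely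
supported measure `α` with support in `Γ` and every competitor `α'` of `α`,
`∫ c dα ≥ ∫ c dα'`, and `∫ c dα = ∫ c dα'` implies `∫ c' dα ≤ ∫ c' dα'`. -/
def IsMaxMonotonicitySet (c c' : ℝ → ℝ → ℝ) (Γ : Set (ℝ × ℝ)) : Prop :=
  ∀ α : Measure (ℝ × ℝ), IsFiniteMeasure α → HasFiniteSupportIn α Γ →
    ∀ α' : Measure (ℝ × ℝ), IsCompetitor α α' →
      (∫ p : ℝ × ℝ, c p.1 p.2 ∂α' ≤ ∫ p : ℝ × ℝ, c p.1 p.2 ∂α) ∧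
      (∫ p : ℝ × ℝ, c p.1 p.2 ∂α = ∫ p : ℝ × ℝ, c p.1 p.2 ∂α' →
        ∫ p : ℝ × ℝ, c' p.1 p.2 ∂α ≤ ∫ p : ℝ × ℝ, c' p.1 p.2 ∂α')

lemma integrable_of_measure_compl_finset_eq_zero {X E : Type*} [MeasurableSpace X]
    [MeasurableSingletonClass X] [NormedAddCommGroup E] {α : Measure X} [IsFiniteMeasure α]
    {S : Finset X} (hS : α (↑S)ᶜ = 0) (f : X → E) : Integrable f α := by
  rw [← Measure.restrict_eq_self_of_ae_mem (mem_ae_iff.2 hS)]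
  exact IntegrableOn.finset

section TwoFiberMeasure

/-- The measure `δ_x ⊗ ρ + δ_{x'} ⊗ σ`, with `ρ` on the fiber over `x` and `σ` on the fiber
over `x'`. Interchanging `x` and `x'` exchanges the fibers. -/
def twoFiberMeasure {X Y : Type*} [MeasurableSpace X] [MeasurableSpace Y] (x x' : X)
    (ρ σ : Measure Y) : Measure (X × Y) :=
  (Measure.dirac x).prod ρ + (Measure.dirac x').prod σ

variable {X Y : Type*} [MeasurableSpace X] [MeasurableSpace Y] (x x' : X)
  (ρ σ : Measure Y)

instance [IsFiniteMeasure ρ] [IsFiniteMeasure σ] : IsFiniteMeasure (twoFiberMeasure x x' ρ σ) := by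
  unfold twoFiberMeasure
  infer_instance

variable [SFinite ρ] [SFinite σ]

lemma map_fst_twoFiberMeasure :
    (twoFiberMeasure x x' ρ σ).map Prod.fst =
      ρ Set.univ • Measure.dirac x + σ Set.univ • Measure.dirac x' := by
  simp only [twoFiberMeasure, Measure.map_add _ _ measurable_fst, Measure.map_fst_prod]

lemma map_snd_twoFiberMeasure : (twoFiberMeasure x x' ρ σ).map Prod.snd = ρ + σ := by
  simp only [twoFiberMeasure, Measure.map_add _ _ measurable_snd, Measure.map_snd_prod,
    measure_univ, one_smul]

variable [MeasurableSingletonClass X]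

lemma twoFiberMeasure_apply (A : Set (X × Y)) :
    twoFiberMeasure x x' ρ σ A = ρ (Prod.mk x ⁻¹' A) + σ (Prod.mk x' ⁻¹' A) := by
  simp only [twoFiberMeasure, Measure.add_apply, Measure.dirac_prod,
    (measurableEmbedding_prodMk_left _).map_apply]

variable {ρ σ}

lemma integral_twoFiberMeasure {E : Type*} [NormedAddCommGroup E] [NormedSpace ℝ E]
    {f : X × Y → E} (hρ : Integrable (fun y => f (x, y)) ρ)
    (hσ : Integrable (fun y => f (x', y)) σ) :
    ∫ p, f p ∂twoFiberMeasure x x' ρ σ = ∫ y, f (x, y) ∂ρ + ∫ y, f (x', y) ∂σ := by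
  have hx := measurableEmbedding_prodMk_left (β := Y) x
  have hx' := measurableEmbedding_prodMk_left (β := Y) x'
  rw [twoFiberMeasure, Measure.dirac_prod, Measure.dirac_prod,
    integral_add_measure (hx.integrable_map_iff.2 hρ) (hx'.integrable_map_iff.2 hσ),
    hx.integral_map, hx'.integral_map]

end TwoFiberMeasure

section FiberExchange

variable {x x' : ℝ} {ρ σ : Measure ℝ} {S T : Finset ℝ} {c c' : ℝ → ℝ → ℝ}
  {Γ : Set (ℝ × ℝ)}

lemma hasFiniteSupportIn_twoFiberMeasure [SFinite ρ] [SFinite σ] (hS : ρ (↑S)ᶜ = 0)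
    (hT : σ (↑T)ᶜ = 0) (hSΓ : ∀ y ∈ S, (x, y) ∈ Γ) (hTΓ : ∀ y ∈ T, (x', y) ∈ Γ) :
    HasFiniteSupportIn (twoFiberMeasure x x' ρ σ) Γ := by
  refine ⟨{x} ×ˢ S ∪ {x'} ×ˢ T, ?_, ?_⟩
  · rintro ⟨u, y⟩ h
    simp only [Finset.mem_coe, Finset.mem_union, Finset.mem_product, Finset.mem_singleton] at h
    rcases h with ⟨rfl, hy⟩ | ⟨rfl, hy⟩
    exacts [hSΓ y hy, hTΓ y hy]
  · rw [twoFiberMeasure_apply, add_eq_zero]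
    exact ⟨measure_mono_null (Set.compl_subset_compl.2 fun _ hy => Finset.mem_union_left _ <|
        Finset.mk_mem_product (Finset.mem_singleton_self x) hy) hS,
      measure_mono_null (Set.compl_subset_compl.2 fun _ hy => Finset.mem_union_right _ <|
        Finset.mk_mem_product (Finset.mem_singleton_self x') hy) hT⟩

lemma setIntegral_snd_twoFiberMeasure [SFinite ρ] [SFinite σ]
    (hρ : Integrable (fun y => y) ρ) (hσ : Integrable (fun y => y) σ) (z : ℝ) :
    ∫ p in {p : ℝ × ℝ | p.1 = z}, p.2 ∂twoFiberMeasure x x' ρ σ =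
      (if x = z then ∫ y, y ∂ρ else 0) + if x' = z then ∫ y, y ∂σ else 0 := by
  have hz : MeasurableSet {p : ℝ × ℝ | p.1 = z} := measurable_fst (measurableSet_singleton z)
  have hint (u : ℝ) {τ : Measure ℝ} (hτ : Integrable (fun y => y) τ) :
      Integrable (fun y => Set.indicator {p : ℝ × ℝ | p.1 = z} Prod.snd (u, y)) τ := by
    by_cases hu : u = z
    · simpa [Set.indicator_apply, hu] using hτ
    · simp [hu]
  rw [← integral_indicator hz, integral_twoFiberMeasure x x' (hint x hρ) (hint x' hσ)]
  congr 1 <;> split_ifs with h <;> simp [h]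

variable [IsFiniteMeasure ρ] [IsFiniteMeasure σ]

lemma isCompetitor_twoFiberMeasure_swap (hS : ρ (↑S)ᶜ = 0) (hT : σ (↑T)ᶜ = 0)
    (hmass : ρ Set.univ = σ Set.univ) (hmean : ∫ y, y ∂ρ = ∫ y, y ∂σ) :
    IsCompetitor (twoFiberMeasure x x' ρ σ) (twoFiberMeasure x' x ρ σ) := by
  have hρ := integrable_of_measure_compl_finset_eq_zero hS fun y => y
  have hσ := integrable_of_measure_compl_finset_eq_zero hT fun y => y
  obtain ⟨U, -, hU⟩ : HasFiniteSupportIn (twoFiberMeasure x' x ρ σ) Set.univ :=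
    hasFiniteSupportIn_twoFiberMeasure hS hT (fun _ _ => trivial) fun _ _ => trivial
  refine ⟨⟨U, hU⟩, ?_, ?_, fun z => ?_⟩
  · rw [map_fst_twoFiberMeasure, map_fst_twoFiberMeasure, hmass, add_comm]
  · rw [map_snd_twoFiberMeasure, map_snd_twoFiberMeasure]
  · rw [setIntegral_snd_twoFiberMeasure hρ hσ, setIntegral_snd_twoFiberMeasure hρ hσ, hmean,
      add_comm]

lemma IsMaxMonotonicitySet.integral_sub_le_integral_sub (hΓ : IsMaxMonotonicitySet c c' Γ)
    (hS : ρ (↑S)ᶜ = 0) (hT : σ (↑T)ᶜ = 0)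
    (hSΓ : ∀ y ∈ S, (x, y) ∈ Γ) (hTΓ : ∀ y ∈ T, (x', y) ∈ Γ)
    (hmass : ρ Set.univ = σ Set.univ) (hmean : ∫ y, y ∂ρ = ∫ y, y ∂σ) :
    ∫ y, (c x y - c x' y) ∂σ ≤ ∫ y, (c x y - c x' y) ∂ρ := by
  have hρ (f : ℝ → ℝ) : Integrable f ρ := integrable_of_measure_compl_finset_eq_zero hS f
  have hσ (f : ℝ → ℝ) : Integrable f σ := integrable_of_measure_compl_finset_eq_zero hT f
  have hswap := (hΓ _ inferInstance (hasFiniteSupportIn_twoFiberMeasure hS hT hSΓ hTΓ) _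
    (isCompetitor_twoFiberMeasure_swap hS hT hmass hmean)).1
  rw [integral_twoFiberMeasure _ _ (hρ _) (hσ _),
    integral_twoFiberMeasure _ _ (hρ _) (hσ _)] at hswap
  rw [integral_sub (hρ _) (hρ _), integral_sub (hσ _) (hσ _)]
  linarith

open scoped NNReal in
lemma IsMaxMonotonicitySet.sub_le_convex_combination (hΓ : IsMaxMonotonicitySet c c' Γ)
    {y₁ y₂ : ℝ} {a b : ℝ≥0} (hab : a + b = 1) (h₁ : (x, y₁) ∈ Γ) (h₂ : (x, y₂) ∈ Γ)
    (h' : (x', a * y₁ + b * y₂) ∈ Γ) :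
    c x (a * y₁ + b * y₂) - c x' (a * y₁ + b * y₂) ≤
      a * (c x y₁ - c x' y₁) + b * (c x y₂ - c x' y₂) := by
  let ρ : Measure ℝ := a • Measure.dirac y₁ + b • Measure.dirac y₂
  let σ : Measure ℝ := Measure.dirac (a * y₁ + b * y₂)
  have hρ_integral (f : ℝ → ℝ) : ∫ y, f y ∂ρ = a * f y₁ + b * f y₂ := by
    have hint (t : ℝ≥0) (y : ℝ) : Integrable f (t • Measure.dirac y) :=
      (integrable_dirac enorm_lt_top).smul_measure_nnreal
    simp only [ρ, integral_add_measure (hint a y₁) (hint b y₂), integral_smul_nnreal_measure,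
      integral_dirac, NNReal.smul_def, smul_eq_mul]
  have hmass : ρ Set.univ = σ Set.univ := by
    simp only [ρ, σ, Measure.add_apply, Measure.smul_apply, measure_univ, ENNReal.smul_def,
      smul_eq_mul, mul_one]
    exact_mod_cast hab
  have hS : ρ (↑({y₁, y₂} : Finset ℝ))ᶜ = 0 := by simp [ρ]
  have hT : σ (↑({a * y₁ + b * y₂} : Finset ℝ))ᶜ = 0 := by simp [σ]
  have hmean : ∫ y, y ∂ρ = ∫ y, y ∂σ := by rw [hρ_integral fun y => y, integral_dirac]
  have hle := hΓ.integral_sub_le_integral_sub (x := x) (x' := x') hS hT (by simp [h₁, h₂])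
    (by simpa using h') hmass hmean
  rwa [hρ_integral, integral_dirac] at hle

end FiberExchange

section AbsoluteValueCost

variable {x x' y : ℝ}

lemma abs_add_sub_abs_add_le : |x + y| - |x' + y| ≤ |x - x'| := by
  simpa only [add_sub_add_right_eq_sub] using abs_sub_abs_le_abs_sub (x + y) (x' + y)

lemma abs_add_sub_abs_add_eq_iff :
    |x + y| - |x' + y| = |x - x'| ↔ 0 ≤ (x - x') * (x' + y) := by
  rw [sub_eq_iff_eq_add, show x + y = (x - x') + (x' + y) by ring, abs_add_eq_add_abs_iff,
    mul_nonneg_iff]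

-- A function lying below its chord at an interior maximum is also maximal at the endpoints.
lemma IsMaxMonotonicitySet.mul_add_nonneg_of_mem_openSegment {c' : ℝ → ℝ → ℝ} {Γ : Set (ℝ × ℝ)}
    (hΓ : IsMaxMonotonicitySet (fun x y => |x + y|) c' Γ) {y₁ y₂ y' : ℝ}
    (h₁ : (x, y₁) ∈ Γ) (h₂ : (x, y₂) ∈ Γ) (h' : (x', y') ∈ Γ) (hy' : y' ∈ openSegment ℝ y₁ y₂)
    (hmax : 0 ≤ (x - x') * (x' + y')) : 0 ≤ (x - x') * (x' + y₁) := by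
  obtain ⟨a, b, ha, hb, hab, rfl⟩ := hy'
  lift a to NNReal using ha.le
  lift b to NNReal using hb.le
  simp only [smul_eq_mul] at h' hmax
  have hchord := hΓ.sub_le_convex_combination (mod_cast hab) h₁ h₂ h'
  rw [abs_add_sub_abs_add_eq_iff.2 hmax] at hchord
  have hle₁ : |x + y₁| - |x' + y₁| ≤ |x - x'| := abs_add_sub_abs_add_le
  have hle₂ : |x + y₂| - |x' + y₂| ≤ |x - x'| := abs_add_sub_abs_add_le
  refine abs_add_sub_abs_add_eq_iff.1 (hle₁.antisymm (le_of_mul_le_mul_left ?_ ha))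
  calc a * |x - x'| = |x - x'| - b * |x - x'| := by rw [eq_sub_iff_add_eq, ← add_mul, hab, one_mul]
    _ ≤ |x - x'| - b * (|x + y₂| - |x' + y₂|) := by gcongr
    _ ≤ a * (|x + y₁| - |x' + y₁|) := by linarith

end AbsoluteValueCost

theorem max_forbidden_configurations_general {c' : ℝ → ℝ → ℝ} {Γ : Set (ℝ × ℝ)}
    (hΓ : IsMaxMonotonicitySet (fun x y => |x + y|) c' Γ) {x x' ym yp y' : ℝ}
    (hp : (x, yp) ∈ Γ) (hm : (x, ym) ∈ Γ) (h' : (x', y') ∈ Γ)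
    (h1 : ym < -x') (h2 : -x' < yp) (h3 : ym < y') (h4 : y' < yp) :
    ¬(y' ≤ -x' ∧ x < x') ∧ ¬(-x' ≤ y' ∧ x' < x) := by
  have hy' : y' ∈ openSegment ℝ ym yp := by
    rw [openSegment_eq_Ioo (h3.trans h4)]
    exact ⟨h3, h4⟩
  constructor
  · rintro ⟨hy'x', hxx'⟩
    have hmax : 0 ≤ (x - x') * (x' + y') :=
      mul_nonneg_of_nonpos_of_nonpos (by linarith) (by linarith)
    have hyp : (x - x') * (x' + yp) < 0 := mul_neg_of_neg_of_pos (by linarith) (by linarith)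
    exact hyp.not_ge <| hΓ.mul_add_nonneg_of_mem_openSegment hp hm h'
      (openSegment_symm ℝ ym yp ▸ hy') hmax
  · rintro ⟨hy'x', hxx'⟩
    have hmax : 0 ≤ (x - x') * (x' + y') := mul_nonneg (by linarith) (by linarith)
    have hym : (x - x') * (x' + ym) < 0 := mul_neg_of_pos_of_neg (by linarith) (by linarith)
    exact hym.not_ge <| hΓ.mul_add_nonneg_of_mem_openSegment hm hp h' hy' hmax

/-- Corollary (maximising case): on the monotonicity set of a maximising
(and secondarily minimising) martingale transport for `c(x,y) = |x+y|`,
`c'(x,y) = |x+y|·y²`, with `supp μ ⊆ [0,∞)`: if `(x,y⁺), (x,y⁻), (x',y') ∈ Γ`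
with `y⁻ < -x' < y⁺` and `y⁻ < y' < y⁺`, then neither
(i) `y' ≤ -x'` and `x < x'`, nor (ii) `-x' ≤ y'` and `x' < x` can hold. -/
theorem max_forbidden_configurations
    (μ ν : Measure ℝ) [IsProbabilityMeasure μ] [IsProbabilityMeasure ν]
    (hconv : InConvexOrder μ ν)
    (hsupp : μ (Set.Iio 0) = 0)
    (Γ : Set (ℝ × ℝ))
    (hΓ : IsMaxMonotonicitySet (fun x y => |x + y|) (fun x y => |x + y| * y ^ 2) Γ)
    (x x' ym yp y' : ℝ)
    (hp : (x, yp) ∈ Γ) (hm : (x, ym) ∈ Γ) (h' : (x', y') ∈ Γ)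
    (h1 : ym < -x') (h2 : -x' < yp) (h3 : ym < y') (h4 : y' < yp) :
    ¬(y' ≤ -x' ∧ x < x') ∧ ¬(-x' ≤ y' ∧ x' < x) := by
  exact max_forbidden_configurations_general hΓ hp hm h' h1 h2 h3 h4
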